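/- ₃F₂(1/2, 1/2−a, a+1/2; 1−a, a+1; −1) = π² a csc(πa) / (√2 · Γ(5/8−a/2) Γ(7/8−a/2) Γ(a/2+5/8) Γ(a/2+7/8)) for every real a with 0 < a < 1/2. -/

import Mathlib

noncomputable def poch (a : ℝ) (n : ℕ) : ℝ := ∏ i ∈ Finset.range n, (a + i)

open MeasureTheory Set
open ProbabilityTheory (beta beta_pos)

lemma poch_zero (a : ℝ) : poch a 0 = 1 := by simp [poch]

lemma poch_succ (a : ℝ) (n : ℕ) : poch a (n + 1) = poch a n * (a + n) :=
  Finset.prod_range_succ _ _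

lemma poch_pos {a : ℝ} (ha : 0 < a) (n : ℕ) : 0 < poch a n :=
  Finset.prod_pos fun _ _ => by positivity

lemma Gamma_add_natCast {a : ℝ} (ha : 0 < a) (n : ℕ) :
    Real.Gamma (a + n) = poch a n * Real.Gamma a := by
  induction n with
  | zero => simp [poch_zero]
  | succ n ih =>
    have h : a + n ≠ 0 := by positivity
    rw [poch_succ, Nat.cast_succ, ← add_assoc, Real.Gamma_add_one h, ih]
    ring

lemma poch_two_mul (b : ℝ) (k : ℕ) :
    poch b (2 * k) = 4 ^ k * poch (b / 2) k * poch ((b + 1) / 2) k := by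
  induction k with
  | zero => simp [poch_zero]
  | succ k ih =>
    rw [show 2 * (k + 1) = 2 * k + 1 + 1 by ring, poch_succ, poch_succ, poch_succ, poch_succ, ih]
    push_cast
    ring

lemma poch_one (n : ℕ) : poch 1 n = n.factorial := by
  induction n with
  | zero => simp [poch_zero]
  | succ n ih => rw [poch_succ, ih, Nat.factorial_succ]; push_cast; ring

lemma factorial_two_mul (k : ℕ) :
    ((2 * k).factorial : ℝ) = 4 ^ k * poch (1 / 2) k * k.factorial := by
  rw [← poch_one, poch_two_mul, ← poch_one]
  norm_num

lemma poch_eq_ascPochhammer (b : ℝ) (n : ℕ) : poch b n = (ascPochhammer ℝ n).eval b := by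
  induction n with
  | zero => simp [poch_zero]
  | succ n ih => rw [poch_succ, ih, ascPochhammer_succ_eval]

lemma hasSum_poch_div_factorial_mul_pow (b : ℝ) {x : ℝ} (hx : |x| < 1) :
    HasSum (fun n : ℕ => poch b n / n.factorial * x ^ n) ((1 - x) ^ (-b)) := by
  have h := (Real.one_div_one_sub_rpow_hasFPowerSeriesOnBall_zero b).hasSum (y := x)
    (by simpa [enorm_eq_nnnorm] using! hx)
  have h0 : 0 ≤ 1 - x := by linarith [(abs_lt.1 hx).2]
  rw [zero_add, one_div, ← Real.rpow_neg h0] at h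
  refine h.congr_fun fun n => ?_
  rw [FormalMultilinearSeries.ofScalars_apply_eq, smul_eq_mul, ← Ring.multichoose_eq,
    poch_eq_ascPochhammer, ← Polynomial.ascPochhammer_smeval_eq_eval,
    Polynomial.ascPochhammer_smeval_cast,
    ← Ring.factorial_nsmul_multichoose_eq_ascPochhammer, nsmul_eq_mul,
    mul_div_cancel_left₀ _ (by positivity)]

lemma integral_cos_pow_even (k : ℕ) :
    ∫ θ in (0 : ℝ)..Real.pi, Real.cos θ ^ (2 * k) =
      Real.pi * (poch (1 / 2) k / k.factorial) := by
  induction k with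
  | zero => simp [poch_zero]
  | succ k ih =>
    rw [show 2 * (k + 1) = 2 * k + 2 by ring, integral_cos_pow, ih, poch_succ, Nat.factorial_succ]
    simp only [Real.sin_pi, Real.sin_zero, Nat.cast_mul, Nat.cast_ofNat, Nat.cast_succ]
    field_simp
    ring

lemma integral_cos_pow_odd (k : ℕ) :
    ∫ θ in (0 : ℝ)..Real.pi, Real.cos θ ^ (2 * k + 1) = 0 := by
  induction k with
  | zero => simp
  | succ k ih =>
    rw [show 2 * (k + 1) + 1 = (2 * k + 1) + 2 by ring, integral_cos_pow, ih]
    simp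

lemma integral_sin_half_pow_even (k : ℕ) :
    ∫ θ in (0 : ℝ)..Real.pi, Real.sin (θ / 2) ^ (2 * k) =
      Real.pi * (poch (1 / 2) k / k.factorial) := by
  rw [intervalIntegral.integral_comp_div (fun x => Real.sin x ^ (2 * k)) two_ne_zero, zero_div]
  induction k with
  | zero => simp [poch_zero]; ring
  | succ k ih =>
    rw [smul_eq_mul] at *
    rw [show 2 * (k + 1) = 2 * k + 2 by ring, integral_sin_pow, mul_add, mul_left_comm, ih,
      poch_succ, Nat.factorial_succ]
    simp only [Real.cos_pi_div_two, Real.sin_zero, Nat.cast_mul, Nat.cast_ofNat, Nat.cast_succ]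
    field_simp
    simp
    ring

lemma hasSum_integral_one_sub_rpow_neg {b : ℝ} (hb : 0 < b) {f : ℝ → ℝ} (hf : Continuous f)
    {r : ℝ} (hr : r < 1) (hfr : ∀ θ, |f θ| ≤ r) :
    HasSum (fun n : ℕ => poch b n / n.factorial * ∫ θ in (0 : ℝ)..Real.pi, f θ ^ n)
      (∫ θ in (0 : ℝ)..Real.pi, (1 - f θ) ^ (-b)) := by
  have hr0 : 0 ≤ r := (abs_nonneg _).trans (hfr 0)
  have hs := (hasSum_poch_div_factorial_mul_pow b
    (by rwa [abs_of_nonneg hr0] : |r| < 1)).summable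
  have h := intervalIntegral.hasSum_integral_of_dominated_convergence (μ := volume) (a := 0)
    (b := Real.pi) (F := fun (n : ℕ) θ => poch b n / n.factorial * f θ ^ n)
    (f := fun θ => (1 - f θ) ^ (-b)) (fun n _ => poch b n / n.factorial * r ^ n)
    (fun n => (by fun_prop : Continuous _).aestronglyMeasurable) ?_
    (.of_forall fun _ _ => hs) intervalIntegrable_const ?_
  · simpa only [intervalIntegral.integral_const_mul] using h
  · refine fun n => .of_forall fun θ _ => ?_
    have := poch_pos hb n
    rw [norm_mul, norm_pow, Real.norm_of_nonneg (by positivity)]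
    gcongr
    exact hfr θ
  · exact .of_forall fun θ _ => hasSum_poch_div_factorial_mul_pow b ((hfr θ).trans_lt hr)

/-- The mean of `(1 - z v) ^ (-b)` when `v` is arcsine distributed, that is, `₂F₁(b, 1/2; 1; z)`. -/
noncomputable def arcsineMean (b z : ℝ) : ℝ :=
  (∫ θ in (0 : ℝ)..Real.pi, (1 - z * Real.sin (θ / 2) ^ 2) ^ (-b)) / Real.pi

lemma hasSum_arcsineMean {b z : ℝ} (hb : 0 < b) (hz0 : 0 ≤ z) (hz1 : z < 1) :
    HasSum (fun k : ℕ => poch b k / k.factorial * (poch (1 / 2) k / k.factorial) * z ^ k)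
      (arcsineMean b z) := by
  have h := (hasSum_integral_one_sub_rpow_neg hb (f := fun θ => z * Real.sin (θ / 2) ^ 2)
    (by fun_prop) hz1 fun θ => ?_).div_const Real.pi
  · refine h.congr_fun fun k => ?_
    simp only [mul_pow, ← pow_mul, intervalIntegral.integral_const_mul,
      integral_sin_half_pow_even]
    field_simp
  · rw [abs_of_nonneg (by positivity)]
    exact mul_le_of_le_one_right hz0 (Real.sin_sq_le_one _)

/-- The quadratic transformation of `₂F₁(b, 1/2; 1; z)`. -/
lemma hasSum_arcsineMean_quadratic {b z : ℝ} (hb : 0 < b) (hz0 : 0 ≤ z) (hz1 : z < 1) :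
    HasSum (fun k : ℕ => (1 - z / 2) ^ (-b) * (poch b (2 * k) / (2 * k).factorial *
      (poch (1 / 2) k / k.factorial) * (z / (2 - z)) ^ (2 * k))) (arcsineMean b z) := by
  have hz2 : 0 < 2 - z := by linarith
  have hτ0 : 0 ≤ z / (2 - z) := by positivity
  have hτ1 : z / (2 - z) < 1 := by rw [div_lt_one hz2]; linarith
  have h := hasSum_integral_one_sub_rpow_neg hb (f := fun θ => -(z / (2 - z)) * Real.cos θ)
    (by fun_prop) hτ1 fun θ => ?_
  · have hinj : Function.Injective fun k : ℕ => 2 * k := fun _ _ h => by simpa using h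
    rw [← hinj.hasSum_iff] at h
    · have hv : arcsineMean b z = (1 - z / 2) ^ (-b) *
          ((∫ θ in (0 : ℝ)..Real.pi, (1 - -(z / (2 - z)) * Real.cos θ) ^ (-b)) / Real.pi) := by
        rw [mul_div_assoc', ← intervalIntegral.integral_const_mul, arcsineMean]
        congr 1
        refine intervalIntegral.integral_congr fun θ _ => ?_
        have h1 : 0 ≤ 1 - -(z / (2 - z)) * Real.cos θ := by
          nlinarith [Real.neg_one_le_cos θ]
        have h2 : Real.sin (θ / 2) ^ 2 = (1 - Real.cos θ) / 2 := by
          rw [Real.sin_sq_eq_half_sub, mul_div_cancel₀ _ two_ne_zero]; ring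
        rw [← Real.mul_rpow (by linarith) h1, h2]
        congr 1
        field_simp
        ring
      rw [hv]
      refine ((h.div_const Real.pi).mul_left _).congr_fun fun k => ?_
      simp only [Function.comp_apply, mul_pow, intervalIntegral.integral_const_mul,
        integral_cos_pow_even, (even_two_mul k).neg_pow]
      field_simp
    · intro n hn
      obtain ⟨k, rfl | rfl⟩ := Nat.even_or_odd' n
      · exact absurd ⟨k, rfl⟩ hn
      · simp only [mul_pow, intervalIntegral.integral_const_mul, integral_cos_pow_odd, mul_zero]
  · rw [abs_mul, abs_neg, abs_of_nonneg hτ0]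
    exact mul_le_of_le_one_right hτ0 (Real.abs_cos_le_one θ)

lemma lintegral_beta {p q : ℝ} (hp : 0 < p) (hq : 0 < q) :
    ∫⁻ x in Ioo (0 : ℝ) 1, ENNReal.ofReal (x ^ (p - 1) * (1 - x) ^ (q - 1)) =
      ENNReal.ofReal (beta p q) := by
  have hB := beta_pos hp hq
  have h : ∫⁻ x in Ioo (0 : ℝ) 1, ENNReal.ofReal (x ^ (p - 1) * (1 - x) ^ (q - 1)) =
      ENNReal.ofReal (beta p q) * ∫⁻ x, ProbabilityTheory.betaPDF p q x := by
    rw [ProbabilityTheory.lintegral_betaPDF, ← lintegral_const_mul _ (by fun_prop)]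
    refine lintegral_congr fun x => ?_
    rw [← ENNReal.ofReal_mul hB.le]
    congr 1
    field_simp
  rw [h, ProbabilityTheory.lintegral_betaPDF_eq_one hp hq, mul_one]

lemma lintegral_const_mul_beta {K p q : ℝ} (hK : 0 ≤ K) (hp : 0 < p) (hq : 0 < q) :
    ∫⁻ x in Ioo (0 : ℝ) 1, ENNReal.ofReal (K * (x ^ (p - 1) * (1 - x) ^ (q - 1))) =
      ENNReal.ofReal (K * beta p q) := by
  rw [ENNReal.ofReal_mul hK, ← lintegral_beta hp hq, ← lintegral_const_mul _ (by fun_prop)]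
  exact lintegral_congr fun x => ENNReal.ofReal_mul hK

lemma lintegral_ofReal_eq_tsum {f : ℕ → ℝ → ℝ} {F : ℝ → ℝ} {c : ℕ → ℝ}
    (hf : ∀ n, Measurable (f n)) (hf0 : ∀ n, ∀ x ∈ Ioo (0 : ℝ) 1, 0 ≤ f n x)
    (hF : ∀ᵐ x ∂volume.restrict (Ioo (0 : ℝ) 1), HasSum (fun n => f n x) (F x))
    (hc : ∀ n, ∫⁻ x in Ioo (0 : ℝ) 1, ENNReal.ofReal (f n x) = ENNReal.ofReal (c n)) :
    ∫⁻ x in Ioo (0 : ℝ) 1, ENNReal.ofReal (F x) = ∑' n, ENNReal.ofReal (c n) := by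
  simp_rw [← hc]
  rw [← lintegral_tsum fun n => (hf n).ennreal_ofReal.aemeasurable]
  refine lintegral_congr_ae ?_
  filter_upwards [hF, ae_restrict_mem measurableSet_Ioo] with x hx hx1
  rw [← hx.tsum_eq, ENNReal.ofReal_tsum_of_nonneg (fun n => hf0 n x hx1) hx.summable]

lemma hasSum_of_tsum_ofReal_eq {c : ℕ → ℝ} {C : ℝ} (hc : ∀ n, 0 ≤ c n) (hC : 0 ≤ C)
    (h : ∑' n, ENNReal.ofReal (c n) = ENNReal.ofReal C) : HasSum c C := by
  have h1 := ENNReal.hasSum_toReal (f := fun n => ENNReal.ofReal (c n)) (by simp [h])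
  rw [← ENNReal.tsum_toReal_eq fun n => ENNReal.ofReal_ne_top, h, ENNReal.toReal_ofReal hC] at h1
  exact h1.congr_fun fun n => (ENNReal.toReal_ofReal (hc n)).symm

/-- The Gauss summation theorem for `₂F₁(α, β; γ; 1)`. -/
lemma hasSum_gauss {α β γ : ℝ} (hα : 0 < α) (hβ : 0 < β) (hγ : α + β < γ) :
    HasSum (fun k : ℕ => poch α k * poch β k / (k.factorial * poch γ k))
      (Real.Gamma γ * Real.Gamma (γ - α - β) / (Real.Gamma (γ - α) * Real.Gamma (γ - β))) := by
  have hγ0 : 0 < γ := by linarith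
  have hγβ : 0 < γ - β := by linarith
  have hδ : 0 < γ - α - β := by linarith
  have g1 := Real.Gamma_pos_of_pos hβ
  have g2 := Real.Gamma_pos_of_pos hγβ
  have g3 := Real.Gamma_pos_of_pos hγ0
  have key : HasSum (fun k : ℕ => poch α k / k.factorial * beta (β + k) (γ - β))
      (beta β (γ - α - β)) := by
    refine hasSum_of_tsum_ofReal_eq (fun k => ?_) (beta_pos hβ hδ).le ?_
    · have := poch_pos hα k
      have := beta_pos (by positivity : 0 < β + k) hγβ
      positivity
    rw [← lintegral_beta hβ hδ]
    refine (lintegral_ofReal_eq_tsum (f := fun k x => poch α k / k.factorial *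
      (x ^ (β + k - 1) * (1 - x) ^ (γ - β - 1))) (fun k => by fun_prop) ?_ ?_ fun k => ?_).symm
    · rintro k x ⟨h0, h1⟩
      have := poch_pos hα k
      have := sub_pos.2 h1
      positivity
    · filter_upwards [ae_restrict_mem measurableSet_Ioo] with x ⟨h0, h1⟩
      have h2 := sub_pos.2 h1
      have h := (hasSum_poch_div_factorial_mul_pow α (by rwa [abs_of_pos h0] : |x| < 1)).mul_right
        (x ^ (β - 1) * (1 - x) ^ (γ - β - 1))
      rw [mul_left_comm, ← Real.rpow_add h2,
        show -α + (γ - β - 1) = γ - α - β - 1 by ring] at h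
      refine h.congr_fun fun k => ?_
      rw [show β + k - 1 = β - 1 + k by ring, Real.rpow_add_natCast h0.ne']
      ring
    · have := poch_pos hα k
      exact lintegral_const_mul_beta (by positivity) (by positivity) hγβ
  have h := key.mul_right (Real.Gamma γ / (Real.Gamma β * Real.Gamma (γ - β)))
  have hv : beta β (γ - α - β) * (Real.Gamma γ / (Real.Gamma β * Real.Gamma (γ - β))) =
      Real.Gamma γ * Real.Gamma (γ - α - β) / (Real.Gamma (γ - α) * Real.Gamma (γ - β)) := by
    rw [beta, show β + (γ - α - β) = γ - α by ring]
    field_simp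
  rw [hv] at h
  refine h.congr_fun fun k => ?_
  have := poch_pos hγ0 k
  rw [beta, show β + k + (γ - β) = γ + k by ring, Gamma_add_natCast hβ, Gamma_add_natCast hγ0]
  field_simp

lemma lintegral_rpow_mul_arcsineMean {b s : ℝ} (hb : 0 < b) (hs : 0 < s) (hbs : b < s + 1 / 2) :
    ∫⁻ q in Ioo (0 : ℝ) 1, ENNReal.ofReal (q ^ (s - 1) * arcsineMean b (1 - q)) =
      ENNReal.ofReal (Real.Gamma s * Real.Gamma (s + 1 / 2 - b) /
        (Real.Gamma (s + 1 - b) * Real.Gamma (s + 1 / 2))) := by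
  have h := (hasSum_gauss hb (by norm_num : (0 : ℝ) < 1 / 2)
    (by linarith : b + 1 / 2 < s + 1)).mul_right (1 / s)
  have hv : Real.Gamma (s + 1) * Real.Gamma (s + 1 - b - 1 / 2) /
      (Real.Gamma (s + 1 - b) * Real.Gamma (s + 1 - 1 / 2)) * (1 / s) =
      Real.Gamma s * Real.Gamma (s + 1 / 2 - b) /
        (Real.Gamma (s + 1 - b) * Real.Gamma (s + 1 / 2)) := by
    rw [Real.Gamma_add_one hs.ne', show s + 1 - b - 1 / 2 = s + 1 / 2 - b by ring,
      show s + 1 - 1 / 2 = s + 1 / 2 by ring]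
    field_simp
  rw [hv] at h
  have hp (k : ℕ) : 0 < poch b k * poch (1 / 2) k / (k.factorial * poch (s + 1) k) * (1 / s) := by
    have := poch_pos hb k
    have := poch_pos (by norm_num : (0 : ℝ) < 1 / 2) k
    have := poch_pos (by positivity : 0 < s + 1) k
    positivity
  rw [← h.tsum_eq, ENNReal.ofReal_tsum_of_nonneg (fun k => (hp k).le) h.summable]
  refine lintegral_ofReal_eq_tsum (f := fun k q => poch b k / k.factorial *
      (poch (1 / 2) k / k.factorial) * (q ^ (s - 1) * (1 - q) ^ ((k + 1 : ℝ) - 1)))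
      (fun k => by fun_prop) ?_ ?_ fun k => ?_
  · rintro k x ⟨h0, h1⟩
    have := poch_pos hb k
    have := poch_pos (by norm_num : (0 : ℝ) < 1 / 2) k
    have := sub_pos.2 h1
    positivity
  · filter_upwards [ae_restrict_mem measurableSet_Ioo] with q ⟨h0, h1⟩
    refine ((hasSum_arcsineMean hb (by linarith : 0 ≤ 1 - q) (by linarith)).mul_left
      (q ^ (s - 1))).congr_fun fun k => ?_
    rw [add_sub_cancel_right, Real.rpow_natCast]
    ring
  · have h1 := poch_pos hb k
    have h2 := poch_pos (by norm_num : (0 : ℝ) < 1 / 2) k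
    have h3 := poch_pos (by positivity : 0 < s + 1) k
    rw [lintegral_const_mul_beta (by positivity) hs (by positivity), beta,
      show s + (k + 1 : ℝ) = s + 1 + k by ring, Gamma_add_natCast (by positivity),
      Real.Gamma_add_one hs.ne', Real.Gamma_nat_eq_factorial]
    have := Real.Gamma_pos_of_pos hs
    congr 1
    field_simp

lemma lintegral_comp_sq_div (g : ℝ → ENNReal) :
    ∫⁻ x in Ioo (0 : ℝ) 1, g x = ∫⁻ q in Ioo (0 : ℝ) 1,
      ENNReal.ofReal (4 * (1 - q) / (1 + q) ^ 3) * g (((1 - q) / (1 + q)) ^ 2) := by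
  have himg : (fun q : ℝ => ((1 - q) / (1 + q)) ^ 2) '' Ioo 0 1 = Ioo 0 1 := by
    ext x
    constructor
    · rintro ⟨q, ⟨h0, h1⟩, rfl⟩
      have h2 : 0 < 1 - q := sub_pos.2 h1
      exact ⟨by positivity, pow_lt_one₀ (by positivity)
        ((div_lt_one (by positivity)).2 (by linarith)) two_ne_zero⟩
    · rintro ⟨h0, h1⟩
      have hs0 := Real.sqrt_pos.2 h0
      have hs1 : √x < 1 := by rwa [Real.sqrt_lt' one_pos, one_pow]
      have hs2 : 0 < 1 - √x := sub_pos.2 hs1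
      refine ⟨(1 - √x) / (1 + √x), ⟨by positivity, (div_lt_one (by positivity)).2 (by linarith)⟩,
        ?_⟩
      beta_reduce
      rw [show (1 - (1 - √x) / (1 + √x)) / (1 + (1 - √x) / (1 + √x)) = √x by field_simp; ring,
        Real.sq_sqrt h0.le]
  have hinj : InjOn (fun q : ℝ => ((1 - q) / (1 + q)) ^ 2) (Ioo 0 1) := by
    rintro q ⟨h0, h1⟩ r ⟨h2, h3⟩ h
    have h4 : 0 < 1 - q := sub_pos.2 h1
    have h5 : 0 < 1 - r := sub_pos.2 h3
    have h6 := (pow_left_inj₀ (by positivity) (by positivity) two_ne_zero).1 h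
    rw [div_eq_div_iff (by positivity) (by positivity)] at h6
    linarith
  have h := lintegral_image_eq_lintegral_abs_deriv_mul measurableSet_Ioo
    (f := fun q : ℝ => ((1 - q) / (1 + q)) ^ 2) (f' := fun q => -(4 * (1 - q) / (1 + q) ^ 3))
    (fun q hq => ?_) hinj g
  · rw [himg] at h
    rw [h]
    refine setLIntegral_congr_fun measurableSet_Ioo fun q ⟨h0, h1⟩ => ?_
    have h2 : 0 < 1 - q := sub_pos.2 h1
    simp only [abs_neg]
    rw [abs_of_pos (by positivity)]
  · have h0 : (1 + q) ≠ 0 := by linarith [hq.1]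
    have := ((((hasDerivAt_id q).const_sub 1).div ((hasDerivAt_id q).const_add 1) h0).pow 2)
    refine (this.congr_deriv ?_).hasDerivWithinAt
    simp
    field_simp
    ring

lemma lintegral_comp_sq_div_add_sq (g : ℝ → ENNReal) :
    ∫⁻ x in Ioo (0 : ℝ) 1, g x = ∫⁻ t in Ioo (0 : ℝ) 1,
      ENNReal.ofReal (2 * t * (1 - t) / (t ^ 2 + (1 - t) ^ 2) ^ 2) *
        g (t ^ 2 / (t ^ 2 + (1 - t) ^ 2)) := by
  have himg : (fun t : ℝ => t ^ 2 / (t ^ 2 + (1 - t) ^ 2)) '' Ioo 0 1 = Ioo 0 1 := by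
    ext x
    constructor
    · rintro ⟨t, ⟨h0, h1⟩, rfl⟩
      have h2 : 0 < 1 - t := sub_pos.2 h1
      refine ⟨by positivity, (div_lt_one (by positivity)).2 ?_⟩
      linarith [pow_pos h2 2]
    · rintro ⟨h0, h1⟩
      have hx := sub_pos.2 h1
      have hs0 := Real.sqrt_pos.2 h0
      have hs1 := Real.sqrt_pos.2 hx
      refine ⟨√x / (√x + √(1 - x)), ⟨by positivity, (div_lt_one (by positivity)).2 (by linarith)⟩,
        ?_⟩
      beta_reduce
      rw [show 1 - √x / (√x + √(1 - x)) = √(1 - x) / (√x + √(1 - x)) by field_simp; ring]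
      simp only [div_pow, Real.sq_sqrt h0.le, Real.sq_sqrt hx.le]
      field_simp
      ring
  have hinj : InjOn (fun t : ℝ => t ^ 2 / (t ^ 2 + (1 - t) ^ 2)) (Ioo 0 1) := by
    rintro q ⟨h0, h1⟩ r ⟨h2, h3⟩ h
    have h4 : 0 < 1 - q := sub_pos.2 h1
    have h5 : 0 < 1 - r := sub_pos.2 h3
    simp only at h
    rw [div_eq_div_iff (by positivity) (by positivity)] at h
    have h6 : (q * (1 - r)) ^ 2 = (r * (1 - q)) ^ 2 := by linarith
    have h7 := (pow_left_inj₀ (by positivity) (by positivity) two_ne_zero).1 h6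
    linarith
  have h := lintegral_image_eq_lintegral_abs_deriv_mul measurableSet_Ioo
    (f := fun t : ℝ => t ^ 2 / (t ^ 2 + (1 - t) ^ 2))
    (f' := fun t => 2 * t * (1 - t) / (t ^ 2 + (1 - t) ^ 2) ^ 2) (fun t ht => ?_) hinj g
  · rw [himg] at h
    rw [h]
    refine setLIntegral_congr_fun measurableSet_Ioo fun t ⟨h0, h1⟩ => ?_
    have h2 : 0 < 1 - t := sub_pos.2 h1
    rw [abs_of_pos (by positivity)]
  · have h0 : t ^ 2 + (1 - t) ^ 2 ≠ 0 := by
      have := ht.1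
      positivity
    have := ((hasDerivAt_id t).pow 2).div
      (((hasDerivAt_id t).pow 2).add (((hasDerivAt_id t).const_sub 1).pow 2)) h0
    refine (this.congr_deriv ?_).hasDerivWithinAt
    simp
    field_simp
    ring

lemma sq_div_substitution {q u v a : ℝ} (hq : 0 < q) (hu : 0 < u) (hv : 0 < v) (k : ℕ) :
    q ^ (a - 1 / 2) * u ^ (-1 / 2 : ℝ) * ((u / 2) ^ (-(2 * a + 1 / 2)) * (v / u) ^ (2 * k)) =
      4 * v / u ^ 3 * ((2 : ℝ) ^ (-1 / 2 : ℝ) *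
        (((v / u) ^ 2) ^ (k + 1 / 2 - 1 : ℝ) * (4 * q / u ^ 2) ^ (a + 1 / 2 - 1))) := by
  suffices h : ∀ c : ℝ, 0 < c →
      q ^ (a - 1 / 2) * u ^ (-1 / 2 : ℝ) * ((u / c) ^ (-(2 * a + 1 / 2)) * (v / u) ^ (2 * k)) =
        c ^ 2 * v / u ^ 3 * (c ^ (-1 / 2 : ℝ) *
          (((v / u) ^ 2) ^ (k + 1 / 2 - 1 : ℝ) * (c ^ 2 * q / u ^ 2) ^ (a + 1 / 2 - 1))) by
    rw [show (4 : ℝ) = 2 ^ 2 by norm_num]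
    exact h 2 two_pos
  intro c hc
  obtain ⟨x, rfl⟩ : ∃ x, Real.exp x = q := ⟨_, Real.exp_log hq⟩
  obtain ⟨y, rfl⟩ : ∃ x, Real.exp x = u := ⟨_, Real.exp_log hu⟩
  obtain ⟨z, rfl⟩ : ∃ x, Real.exp x = v := ⟨_, Real.exp_log hv⟩
  obtain ⟨w, rfl⟩ : ∃ x, Real.exp x = c := ⟨_, Real.exp_log hc⟩
  simp only [← Real.exp_add, ← Real.exp_sub, ← Real.exp_mul, ← Real.exp_nat_mul]
  congr 1
  push_cast
  ring

lemma sq_div_add_sq_substitution {t u d A B : ℝ} (ht : 0 < t) (hu : 0 < u) (hd : 0 < d) (k : ℕ) :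
    t ^ (A - 1) * u ^ (B - 1) * (d ^ (-((A + B) / 2)) * (2 * t * u / d) ^ (2 * k)) =
      2 * t * u / d ^ 2 * (4 ^ k / 2 *
        ((t ^ 2 / d) ^ (A / 2 + k - 1) * (u ^ 2 / d) ^ (B / 2 + k - 1))) := by
  suffices h : ∀ c : ℝ, 0 < c →
      t ^ (A - 1) * u ^ (B - 1) * (d ^ (-((A + B) / 2)) * (c * t * u / d) ^ (2 * k)) =
        c * t * u / d ^ 2 * ((c ^ 2) ^ k / c *
          ((t ^ 2 / d) ^ (A / 2 + k - 1) * (u ^ 2 / d) ^ (B / 2 + k - 1))) by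
    rw [show (4 : ℝ) = 2 ^ 2 by norm_num]
    exact h 2 two_pos
  intro c hc
  obtain ⟨x, rfl⟩ : ∃ x, Real.exp x = t := ⟨_, Real.exp_log ht⟩
  obtain ⟨y, rfl⟩ : ∃ x, Real.exp x = u := ⟨_, Real.exp_log hu⟩
  obtain ⟨z, rfl⟩ : ∃ x, Real.exp x = d := ⟨_, Real.exp_log hd⟩
  obtain ⟨w, rfl⟩ : ∃ x, Real.exp x = c := ⟨_, Real.exp_log hc⟩
  simp only [← Real.exp_add, ← Real.exp_sub, ← Real.exp_mul, ← Real.exp_nat_mul]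
  congr 1
  push_cast
  ring

lemma lintegral_arcsineMean_eq_tsum {a : ℝ} (ha : 0 < a) :
    ∫⁻ q in Ioo (0 : ℝ) 1, ENNReal.ofReal
        (q ^ (a - 1 / 2) * (1 + q) ^ (-1 / 2 : ℝ) * arcsineMean (2 * a + 1 / 2) (1 - q)) =
      ∑' k : ℕ, ENNReal.ofReal (poch (2 * a + 1 / 2) (2 * k) / (2 * k).factorial *
        (poch (1 / 2) k / k.factorial) * (2 : ℝ) ^ (-1 / 2 : ℝ) *
        beta (k + 1 / 2) (a + 1 / 2)) := by
  have hb : 0 < 2 * a + 1 / 2 := by positivity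
  have hE (k : ℕ) : 0 < poch (2 * a + 1 / 2) (2 * k) / (2 * k).factorial *
      (poch (1 / 2) k / k.factorial) := by
    have := poch_pos hb (2 * k)
    have := poch_pos (by norm_num : (0 : ℝ) < 1 / 2) k
    positivity
  refine lintegral_ofReal_eq_tsum (f := fun k q => q ^ (a - 1 / 2) * (1 + q) ^ (-1 / 2 : ℝ) *
      ((1 - (1 - q) / 2) ^ (-(2 * a + 1 / 2)) * (poch (2 * a + 1 / 2) (2 * k) / (2 * k).factorial *
      (poch (1 / 2) k / k.factorial) * ((1 - q) / (2 - (1 - q))) ^ (2 * k))))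
      (fun k => by fun_prop) ?_ ?_ fun k => ?_
  · rintro k q ⟨h0, h1⟩
    have := hE k
    have h2 : 0 < 1 - (1 - q) / 2 := by linarith
    have h3 : 0 < 2 - (1 - q) := by linarith
    have h4 : 0 < 1 - q := by linarith
    positivity
  · filter_upwards [ae_restrict_mem measurableSet_Ioo] with q ⟨h0, h1⟩
    exact (hasSum_arcsineMean_quadratic hb (by linarith) (by linarith)).mul_left _
  · rw [← lintegral_const_mul_beta (by have := hE k; positivity) (by positivity) (by positivity)]
    refine Eq.trans ?_ (lintegral_comp_sq_div _).symm
    refine setLIntegral_congr_fun measurableSet_Ioo fun q ⟨h0, h1⟩ => ?_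
    have h2 : 0 < 1 - q := sub_pos.2 h1
    have h := sq_div_substitution (a := a) h0 (by positivity : 0 < 1 + q) h2 k
    rw [← ENNReal.ofReal_mul (by positivity), show 1 - (1 - q) / 2 = (1 + q) / 2 by ring,
      show 2 - (1 - q) = 1 + q by ring,
      show 1 - ((1 - q) / (1 + q)) ^ 2 = 4 * q / (1 + q) ^ 2 by field_simp; ring]
    congr 1
    linear_combination (poch (2 * a + 1 / 2) (2 * k) / (2 * k).factorial *
      (poch (1 / 2) k / k.factorial)) * h

/-- The Watson summation theorem for `₃F₂(A, B, 1/2; (A + B + 1)/2, 1; 1)`. -/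
lemma hasSum_watson_half {A B : ℝ} (hA : 0 < A) (hB : 0 < B) (hAB : A + B < 2) :
    HasSum (fun k : ℕ => poch A k * poch B k * poch (1 / 2) k /
        (k.factorial * k.factorial * poch ((A + B + 1) / 2) k))
      (beta (A / 2) (B / 2) / (2 * beta A B) *
        (Real.Gamma (1 - (A + B) / 2) / (Real.Gamma (1 - A / 2) * Real.Gamma (1 - B / 2)))) := by
  have hl : 0 < (A + B) / 2 := by positivity
  have hw (k : ℕ) := poch_pos (by norm_num : (0 : ℝ) < 1 / 2) k
  have hβ := beta_pos hA hB
  have hβ2 := beta_pos (half_pos hA) (half_pos hB)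
  have h1 : ∫⁻ t in Ioo (0 : ℝ) 1, ENNReal.ofReal (t ^ (A - 1) * (1 - t) ^ (B - 1) *
      arcsineMean ((A + B) / 2) (4 * t * (1 - t))) = ∑' k : ℕ, ENNReal.ofReal
      (beta A B * (poch A k * poch B k * poch (1 / 2) k /
        (k.factorial * k.factorial * poch ((A + B + 1) / 2) k))) := by
    refine lintegral_ofReal_eq_tsum (f := fun k t => poch ((A + B) / 2) k / k.factorial *
      (poch (1 / 2) k / k.factorial) * 4 ^ k * (t ^ (A + k - 1) * (1 - t) ^ (B + k - 1)))
      (fun k => by fun_prop) ?_ ?_ fun k => ?_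
    · rintro k t ⟨h0, h1⟩
      have := hw k
      have := poch_pos hl k
      have := sub_pos.2 h1
      positivity
    · filter_upwards [ae_restrict_mem measurableSet_Ioo,
        ae_restrict_of_ae (Measure.ae_ne volume (1 / 2 : ℝ))] with t ⟨h0, h1⟩ h2
      have h3 := sub_pos.2 h1
      have h4 : 0 < (1 - 2 * t) ^ 2 := by
        have : 1 - 2 * t ≠ 0 := fun h => h2 (by linarith)
        positivity
      refine ((hasSum_arcsineMean hl (by positivity : 0 ≤ 4 * t * (1 - t))
        (by linarith)).mul_left _).congr_fun fun k => ?_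
      rw [show A + k - 1 = A - 1 + k by ring, show B + k - 1 = B - 1 + k by ring,
        Real.rpow_add_natCast h0.ne', Real.rpow_add_natCast h3.ne', mul_pow, mul_pow]
      ring
    · have := hw k
      have p1 := poch_pos hl k
      have p2 := poch_pos (by positivity : 0 < (A + B + 1) / 2) k
      rw [lintegral_const_mul_beta (by positivity) (by positivity) (by positivity), beta, beta,
        show A + k + (B + k) = (A + B) + (2 * k : ℕ) by push_cast; ring, Gamma_add_natCast hA,
        Gamma_add_natCast hB, Gamma_add_natCast (by positivity), poch_two_mul]
      have := Real.Gamma_pos_of_pos (by positivity : 0 < A + B)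
      congr 1
      field_simp
  have h2 : ∫⁻ t in Ioo (0 : ℝ) 1, ENNReal.ofReal (t ^ (A - 1) * (1 - t) ^ (B - 1) *
      arcsineMean ((A + B) / 2) (4 * t * (1 - t))) = ∑' k : ℕ, ENNReal.ofReal
      (beta (A / 2) (B / 2) / 2 * (poch (A / 2) k * poch (B / 2) k /
        (k.factorial * poch 1 k))) := by
    have hE (k : ℕ) : 0 < poch ((A + B) / 2) (2 * k) / (2 * k).factorial *
        (poch (1 / 2) k / k.factorial) := by
      have := hw k
      have := poch_pos hl (2 * k)
      positivity
    refine lintegral_ofReal_eq_tsum (f := fun k t => t ^ (A - 1) * (1 - t) ^ (B - 1) *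
      ((1 - (4 * t * (1 - t)) / 2) ^ (-((A + B) / 2)) *
      (poch ((A + B) / 2) (2 * k) / (2 * k).factorial * (poch (1 / 2) k / k.factorial) *
      ((4 * t * (1 - t)) / (2 - 4 * t * (1 - t))) ^ (2 * k))))
      (fun k => by fun_prop) ?_ ?_ fun k => ?_
    · rintro k t ⟨h0, h1⟩
      have := hE k
      have := sub_pos.2 h1
      have h4 := sq_nonneg (1 - 2 * t)
      have h5 : 0 ≤ 1 - 4 * t * (1 - t) / 2 := by linarith
      have h6 : 0 ≤ 2 - 4 * t * (1 - t) := by linarith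
      positivity
    · filter_upwards [ae_restrict_mem measurableSet_Ioo,
        ae_restrict_of_ae (Measure.ae_ne volume (1 / 2 : ℝ))] with t ⟨h0, h1⟩ h2
      have h3 := sub_pos.2 h1
      have h4 : 0 < (1 - 2 * t) ^ 2 := by
        have : 1 - 2 * t ≠ 0 := fun h => h2 (by linarith)
        positivity
      exact (hasSum_arcsineMean_quadratic hl (by positivity) (by linarith)).mul_left _
    · have hc : beta (A / 2) (B / 2) / 2 * (poch (A / 2) k * poch (B / 2) k /
          (k.factorial * poch 1 k)) = poch ((A + B) / 2) (2 * k) / (2 * k).factorial *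
          (poch (1 / 2) k / k.factorial) * (4 ^ k / 2) * beta (A / 2 + k) (B / 2 + k) := by
        have := hw k
        have := poch_pos hl (2 * k)
        have := Real.Gamma_pos_of_pos hl
        rw [beta, beta, show A / 2 + k + (B / 2 + k) = (A + B) / 2 + (2 * k : ℕ) by push_cast; ring,
          Gamma_add_natCast (half_pos hA), Gamma_add_natCast (half_pos hB), Gamma_add_natCast hl,
          factorial_two_mul, poch_one, ← add_div]
        field_simp
      rw [hc, ← lintegral_const_mul_beta (by have := hE k; positivity) (by positivity)
        (by positivity)]
      refine Eq.trans ?_ (lintegral_comp_sq_div_add_sq _).symm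
      refine setLIntegral_congr_fun measurableSet_Ioo fun t ⟨h0, h1⟩ => ?_
      have h2 : 0 < 1 - t := sub_pos.2 h1
      have hd : 0 < t ^ 2 + (1 - t) ^ 2 := by positivity
      have h := sq_div_add_sq_substitution (A := A) (B := B) h0 h2 hd k
      rw [← ENNReal.ofReal_mul (by positivity),
        show 1 - 4 * t * (1 - t) / 2 = t ^ 2 + (1 - t) ^ 2 by ring,
        show 2 - 4 * t * (1 - t) = 2 * (t ^ 2 + (1 - t) ^ 2) by ring,
        show 4 * t * (1 - t) / (2 * (t ^ 2 + (1 - t) ^ 2)) =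
          2 * t * (1 - t) / (t ^ 2 + (1 - t) ^ 2) by field_simp; norm_num,
        show 1 - t ^ 2 / (t ^ 2 + (1 - t) ^ 2) = (1 - t) ^ 2 / (t ^ 2 + (1 - t) ^ 2) by
          field_simp; ring]
      congr 1
      linear_combination (poch ((A + B) / 2) (2 * k) / (2 * k).factorial *
        (poch (1 / 2) k / k.factorial)) * h
  have hg := (hasSum_gauss (half_pos hA) (half_pos hB)
    (by linarith : A / 2 + B / 2 < 1)).mul_left (beta (A / 2) (B / 2) / 2)
  rw [Real.Gamma_one, one_mul, show 1 - A / 2 - B / 2 = 1 - (A + B) / 2 by ring] at hg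
  have hg0 (k : ℕ) : 0 ≤ beta (A / 2) (B / 2) / 2 * (poch (A / 2) k * poch (B / 2) k /
      (k.factorial * poch 1 k)) := by
    have := poch_pos (half_pos hA) k
    have := poch_pos (half_pos hB) k
    have := poch_pos one_pos k
    positivity
  rw [h1, ← ENNReal.ofReal_tsum_of_nonneg hg0 hg.summable, hg.tsum_eq] at h2
  have h3 := (hasSum_of_tsum_ofReal_eq (fun k => ?_) (hg.nonneg hg0) h2).div_const (beta A B)
  · have hv : beta (A / 2) (B / 2) / (2 * beta A B) *
        (Real.Gamma (1 - (A + B) / 2) / (Real.Gamma (1 - A / 2) * Real.Gamma (1 - B / 2))) =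
        beta (A / 2) (B / 2) / 2 * (Real.Gamma (1 - (A + B) / 2) /
          (Real.Gamma (1 - A / 2) * Real.Gamma (1 - B / 2))) / beta A B := by
      field_simp
    rw [hv]
    exact h3.congr_fun fun k => (mul_div_cancel_left₀ _ hβ.ne').symm
  · have := poch_pos hA k
    have := poch_pos hB k
    have := hw k
    have := poch_pos (by positivity : 0 < (A + B + 1) / 2) k
    positivity

lemma measurable_arcsineMean (b : ℝ) : Measurable (arcsineMean b) := by
  have h : StronglyMeasurable fun p : ℝ × ℝ => (1 - p.1 * Real.sin (p.2 / 2) ^ 2) ^ (-b) :=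
    (by fun_prop : Measurable _).stronglyMeasurable
  unfold arcsineMean
  simp_rw [intervalIntegral.integral_of_le Real.pi_pos.le]
  exact (h.integral_prod_right' (ν := volume.restrict (Ioc 0 Real.pi))).measurable.div_const _

lemma arcsineMean_nonneg {b z : ℝ} (hb : 0 < b) (hz0 : 0 ≤ z) (hz1 : z < 1) :
    0 ≤ arcsineMean b z := by
  refine (hasSum_arcsineMean hb hz0 hz1).nonneg fun k => ?_
  have := poch_pos hb k
  have := poch_pos (by norm_num : (0 : ℝ) < 1 / 2) k
  positivity

lemma integrableOn_and_integral_eq {f : ℝ → ℝ} {c : ℝ} (hf : Measurable f)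
    (hf0 : ∀ x ∈ Ioo (0 : ℝ) 1, 0 ≤ f x) (hc : 0 ≤ c)
    (h : ∫⁻ x in Ioo (0 : ℝ) 1, ENNReal.ofReal (f x) = ENNReal.ofReal c) :
    IntegrableOn f (Ioo 0 1) ∧ ∫ x in Ioo (0 : ℝ) 1, f x = c := by
  have h0 : 0 ≤ᵐ[volume.restrict (Ioo (0 : ℝ) 1)] f := by
    filter_upwards [ae_restrict_mem measurableSet_Ioo] with x hx using hf0 x hx
  refine ⟨⟨hf.aestronglyMeasurable, ?_⟩, ?_⟩
  · rw [hasFiniteIntegral_iff_ofReal h0, h]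
    exact ENNReal.ofReal_lt_top
  · rw [integral_eq_lintegral_of_nonneg_ae h0 hf.aestronglyMeasurable, h, ENNReal.toReal_ofReal hc]

lemma poch_half_sq_mul_succ_le (n : ℕ) : (poch (1 / 2) n / n.factorial) ^ 2 * (n + 1) ≤ 1 := by
  induction n with
  | zero => simp [poch_zero]
  | succ n ih =>
    refine le_trans ?_ ih
    rw [poch_succ, Nat.factorial_succ, mul_comm (n + 1)]
    push_cast
    rw [mul_div_mul_comm, mul_pow, mul_assoc]
    gcongr
    rw [div_pow, div_mul_eq_mul_div, div_le_iff₀ (by positivity)]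
    nlinarith [(n.cast_nonneg : (0 : ℝ) ≤ n)]

lemma poch_mul_poch_div_le {a : ℝ} (ha0 : 0 ≤ a) (ha1 : a < 1 / 2) (n : ℕ) :
    poch (a + 1 / 2) n * poch (1 / 2 - a) n / (poch (1 - a) n * poch (a + 1) n) ≤
      (poch (1 / 2) n / n.factorial) ^ 2 := by
  induction n with
  | zero => simp [poch_zero]
  | succ n ih =>
    have h1 : 0 < 1 / 2 - a := by linarith
    have h2 : 0 < 1 - a := by linarith
    have := poch_pos h2 n
    have := poch_pos (by positivity : 0 < a + 1) n
    rw [poch_succ, poch_succ, poch_succ, poch_succ, poch_succ, Nat.factorial_succ,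
      mul_comm (n + 1)]
    push_cast
    rw [mul_mul_mul_comm (poch (a + 1 / 2) n), mul_mul_mul_comm (poch (1 - a) n),
      mul_div_mul_comm, mul_div_mul_comm (poch (1 / 2) n), mul_pow]
    refine mul_le_mul ih ?_ (by positivity) (by positivity)
    rw [div_pow, div_le_div_iff₀ (by positivity) (by positivity)]
    nlinarith [mul_nonneg (n.cast_nonneg : (0 : ℝ) ≤ n) (sq_nonneg a), sq_nonneg a]

lemma summable_poch_half_mul {a : ℝ} (ha0 : 0 ≤ a) (ha1 : a < 1 / 2) :
    Summable fun n : ℕ => poch (1 / 2) n / n.factorial *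
      (poch (a + 1 / 2) n * poch (1 / 2 - a) n / (poch (1 - a) n * poch (a + 1) n)) := by
  have h1 : 0 < 1 / 2 - a := by linarith
  have h2 : 0 < 1 - a := by linarith
  have hs : Summable fun n : ℕ => ((n + 1 : ℕ) : ℝ) ^ (-3 / 2 : ℝ) :=
    (summable_nat_add_iff 1).2 (Real.summable_nat_rpow.2 (by norm_num))
  refine hs.of_nonneg_of_le (fun n => ?_) fun n => ?_
  · have := poch_pos h1 n
    have := poch_pos h2 n
    have := poch_pos (by norm_num : (0 : ℝ) < 1 / 2) n
    have := poch_pos (by positivity : 0 < a + 1 / 2) n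
    have := poch_pos (by positivity : 0 < a + 1) n
    positivity
  · have hw := poch_pos (by norm_num : (0 : ℝ) < 1 / 2) n
    have h3 : 0 ≤ poch (1 / 2) n / n.factorial := by positivity
    have h4 : poch (1 / 2) n / n.factorial ≤ ((n + 1 : ℕ) : ℝ) ^ (-1 / 2 : ℝ) := by
      refine (pow_le_pow_iff_left₀ h3 (by positivity) two_ne_zero).1 ?_
      rw [← Real.rpow_mul_natCast (by positivity)]
      norm_num [Real.rpow_neg_one]
      rw [← one_div, le_div_iff₀ (by positivity)]
      simpa using poch_half_sq_mul_succ_le n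
    calc _ ≤ _ * (poch (1 / 2) n / n.factorial) ^ 2 := by
            gcongr
            exact poch_mul_poch_div_le ha0 ha1 n
      _ = (poch (1 / 2) n / n.factorial) ^ 3 := by ring
      _ ≤ (((n + 1 : ℕ) : ℝ) ^ (-1 / 2 : ℝ)) ^ 3 := by gcongr
      _ = _ := by
            rw [← Real.rpow_mul_natCast (by positivity)]
            norm_num

/-- The termwise integral of the binomial series of `(1 + q) ^ (-1 / 2)`. -/
lemma hasSum_integral_mul_arcsineMean {a : ℝ} (ha0 : 0 ≤ a) (ha1 : a < 1 / 2) :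
    HasSum (fun n : ℕ => Real.Gamma (a + 1 / 2) * Real.Gamma (1 / 2 - a) /
        (Real.Gamma (1 - a) * Real.Gamma (a + 1)) *
        (poch (1 / 2) n * poch (1 / 2 - a) n * poch (a + 1 / 2) n /
          (poch (1 - a) n * poch (a + 1) n * n.factorial) * (-1 : ℝ) ^ n))
      (∫ q in Ioo (0 : ℝ) 1,
        q ^ (a - 1 / 2) * (1 + q) ^ (-1 / 2 : ℝ) * arcsineMean (2 * a + 1 / 2) (1 - q)) := by
  have h1 : 0 < 1 / 2 - a := by linarith
  have h2 : 0 < 1 - a := by linarith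
  have h3 : 0 < a + 1 / 2 := by positivity
  have h4 : 0 < a + 1 := by positivity
  have hb : 0 < 2 * a + 1 / 2 := by positivity
  set M := Real.Gamma (a + 1 / 2) * Real.Gamma (1 / 2 - a) /
    (Real.Gamma (1 - a) * Real.Gamma (a + 1)) with hM
  have hM0 : 0 < M := by
    have := Real.Gamma_pos_of_pos h1
    have := Real.Gamma_pos_of_pos h2
    have := Real.Gamma_pos_of_pos h3
    have := Real.Gamma_pos_of_pos h4
    positivity
  set R : ℕ → ℝ := fun n => poch (a + 1 / 2) n * poch (1 / 2 - a) n /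
    (poch (1 - a) n * poch (a + 1) n) with hR
  have hR0 (n : ℕ) : 0 < R n := by
    have := poch_pos h1 n
    have := poch_pos h2 n
    have := poch_pos h3 n
    have := poch_pos h4 n
    positivity
  have hmeas := measurable_arcsineMean (2 * a + 1 / 2)
  have hpos (n : ℕ) : ∀ q ∈ Ioo (0 : ℝ) 1,
      0 ≤ q ^ ((n + a + 1 / 2 : ℝ) - 1) * arcsineMean (2 * a + 1 / 2) (1 - q) := by
    rintro q ⟨h0, h1⟩
    have := arcsineMean_nonneg hb (by linarith : 0 ≤ 1 - q) (by linarith)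
    positivity
  have hG (n : ℕ) := integrableOn_and_integral_eq (by fun_prop) (hpos n)
    (mul_pos hM0 (hR0 n)).le (by
      rw [lintegral_rpow_mul_arcsineMean hb (by positivity)
          (by linarith [(n.cast_nonneg : (0 : ℝ) ≤ n)]),
        show n + a + 1 / 2 + 1 / 2 - (2 * a + 1 / 2) = 1 / 2 - a + n by ring,
        show n + a + 1 / 2 + 1 - (2 * a + 1 / 2) = 1 - a + n by ring,
        show n + a + 1 / 2 + 1 / 2 = a + 1 + n by ring,
        show n + a + 1 / 2 = a + 1 / 2 + n by ring, Gamma_add_natCast h1, Gamma_add_natCast h2,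
        Gamma_add_natCast h3, Gamma_add_natCast h4]
      congr 1
      rw [hM, hR]
      ring)
  have hw (n : ℕ) : 0 ≤ poch (1 / 2) n / n.factorial := by
    have := poch_pos (by norm_num : (0 : ℝ) < 1 / 2) n
    positivity
  have h := hasSum_integral_of_summable_integral_norm
    (μ := volume.restrict (Ioo (0 : ℝ) 1)) (F := fun (n : ℕ) q => poch (1 / 2) n / n.factorial *
      (-1) ^ n * (q ^ ((n + a + 1 / 2 : ℝ) - 1) * arcsineMean (2 * a + 1 / 2) (1 - q)))
    (fun n => (hG n).1.const_mul _) ?_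
  · have hint : ∫ q in Ioo (0 : ℝ) 1,
        q ^ (a - 1 / 2) * (1 + q) ^ (-1 / 2 : ℝ) * arcsineMean (2 * a + 1 / 2) (1 - q) =
        ∫ q in Ioo (0 : ℝ) 1, ∑' n : ℕ, poch (1 / 2) n / n.factorial *
          (-1) ^ n * (q ^ ((n + a + 1 / 2 : ℝ) - 1) * arcsineMean (2 * a + 1 / 2) (1 - q)) := by
      refine setIntegral_congr_fun measurableSet_Ioo fun q ⟨h0, h1⟩ => ?_
      have hq := ((hasSum_poch_div_factorial_mul_pow (1 / 2)
        (by rwa [abs_neg, abs_of_pos h0] : |-q| < 1)).mul_left (q ^ (a - 1 / 2))).mul_right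
        (arcsineMean (2 * a + 1 / 2) (1 - q))
      rw [sub_neg_eq_add, ← neg_div] at hq
      rw [← hq.tsum_eq]
      refine tsum_congr fun n => ?_
      rw [show n + a + 1 / 2 - 1 = a - 1 / 2 + n by ring, Real.rpow_add_natCast h0.ne', neg_pow]
      ring
    rw [hint]
    refine h.congr_fun fun n => ?_
    rw [integral_const_mul, (hG n).2, hR]
    ring
  · refine ((summable_poch_half_mul ha0 ha1).mul_left M).congr fun n => ?_
    have hn : ∫ q in Ioo (0 : ℝ) 1, ‖poch (1 / 2) n / n.factorial * (-1) ^ n *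
        (q ^ ((n + a + 1 / 2 : ℝ) - 1) * arcsineMean (2 * a + 1 / 2) (1 - q))‖ =
        ∫ q in Ioo (0 : ℝ) 1, poch (1 / 2) n / n.factorial *
          (q ^ ((n + a + 1 / 2 : ℝ) - 1) * arcsineMean (2 * a + 1 / 2) (1 - q)) := by
      refine setIntegral_congr_fun measurableSet_Ioo fun q hq => ?_
      rw [norm_mul, norm_mul, norm_pow, norm_neg, norm_one, one_pow, mul_one,
        Real.norm_of_nonneg (hw n), Real.norm_of_nonneg (hpos n q hq)]
    rw [hn, integral_const_mul, (hG n).2]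
    ring

lemma integral_mul_arcsineMean {a : ℝ} (ha0 : 0 < a) (ha1 : a < 1 / 2) :
    ∫ q in Ioo (0 : ℝ) 1,
        q ^ (a - 1 / 2) * (1 + q) ^ (-1 / 2 : ℝ) * arcsineMean (2 * a + 1 / 2) (1 - q) =
      (2 : ℝ) ^ (-1 / 2 : ℝ) * beta (1 / 2) (a + 1 / 2) *
        (beta ((a + 1 / 4) / 2) ((a + 3 / 4) / 2) / (2 * beta (a + 1 / 4) (a + 3 / 4)) *
        (Real.Gamma (1 / 2 - a) / (Real.Gamma (7 / 8 - a / 2) * Real.Gamma (5 / 8 - a / 2)))) := by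
  have hb : 0 < 2 * a + 1 / 2 := by positivity
  have hβ := beta_pos (by norm_num : (0 : ℝ) < 1 / 2) (by positivity : 0 < a + 1 / 2)
  have hW := (hasSum_watson_half (A := a + 1 / 4) (B := a + 3 / 4) (by positivity) (by positivity)
    (by linarith)).mul_left ((2 : ℝ) ^ (-1 / 2 : ℝ) * beta (1 / 2) (a + 1 / 2))
  rw [show (a + 1 / 4 + (a + 3 / 4) + 1) / 2 = a + 1 by ring,
    show 1 - (a + 1 / 4 + (a + 3 / 4)) / 2 = 1 / 2 - a by ring,
    show 1 - (a + 1 / 4) / 2 = 7 / 8 - a / 2 by ring,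
    show 1 - (a + 3 / 4) / 2 = 5 / 8 - a / 2 by ring] at hW
  have hW0 (k : ℕ) : 0 ≤ (2 : ℝ) ^ (-1 / 2 : ℝ) * beta (1 / 2) (a + 1 / 2) *
      (poch (a + 1 / 4) k * poch (a + 3 / 4) k * poch (1 / 2) k /
        (k.factorial * k.factorial * poch (a + 1) k)) := by
    have := poch_pos (by positivity : 0 < a + 1 / 4) k
    have := poch_pos (by positivity : 0 < a + 3 / 4) k
    have := poch_pos (by norm_num : (0 : ℝ) < 1 / 2) k
    have := poch_pos (by positivity : 0 < a + 1) k
    positivity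
  have hmeas := measurable_arcsineMean (2 * a + 1 / 2)
  refine (integrableOn_and_integral_eq (by fun_prop) ?_ (hW.nonneg hW0) ?_).2
  · rintro q ⟨h0, h1⟩
    have := arcsineMean_nonneg hb (by linarith : 0 ≤ 1 - q) (by linarith)
    positivity
  · rw [lintegral_arcsineMean_eq_tsum ha0, ← hW.tsum_eq,
      ENNReal.ofReal_tsum_of_nonneg hW0 hW.summable]
    refine tsum_congr fun k => ?_
    have := poch_pos (by norm_num : (0 : ℝ) < 1 / 2) k
    have := poch_pos (by positivity : 0 < a + 1) k
    have := Real.Gamma_pos_of_pos (by positivity : 0 < a + 1)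
    rw [beta, beta, show k + 1 / 2 + (a + 1 / 2) = a + 1 + k by ring,
      show 1 / 2 + (a + 1 / 2) = a + 1 by ring, add_comm (k : ℝ), Gamma_add_natCast (by norm_num),
      Gamma_add_natCast (by positivity), poch_two_mul, factorial_two_mul,
      show (2 * a + 1 / 2) / 2 = a + 1 / 4 by ring,
      show (2 * a + 1 / 2 + 1) / 2 = a + 3 / 4 by ring]
    congr 1
    field_simp

lemma beta_half_div_two_mul_beta {A B : ℝ} (hA : 0 < A) (hB : 0 < B) :
    beta (A / 2) (B / 2) / (2 * beta A B) = Real.Gamma ((A + B + 1) / 2) * √Real.pi /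
      (Real.Gamma ((A + 1) / 2) * Real.Gamma ((B + 1) / 2)) := by
  have dup {x : ℝ} (hx : 0 < x) : Real.Gamma (x / 2) =
      Real.Gamma x * 2 ^ (1 - x) * √Real.pi / Real.Gamma ((x + 1) / 2) := by
    rw [eq_div_iff (Real.Gamma_pos_of_pos (by positivity)).ne', add_div,
      Real.Gamma_mul_Gamma_add_half, mul_div_cancel₀ _ two_ne_zero]
  have gA := Real.Gamma_pos_of_pos hA
  have gB := Real.Gamma_pos_of_pos hB
  have gC := Real.Gamma_pos_of_pos (add_pos hA hB)
  have gA' := Real.Gamma_pos_of_pos (by positivity : 0 < (A + 1) / 2)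
  have gB' := Real.Gamma_pos_of_pos (by positivity : 0 < (B + 1) / 2)
  have gC' := Real.Gamma_pos_of_pos (by positivity : 0 < (A + B + 1) / 2)
  have hp : (2 : ℝ) ^ (1 - A) * 2 ^ (1 - B) = 2 * 2 ^ (1 - (A + B)) := by
    rw [← Real.rpow_add two_pos]
    nth_rw 2 [← Real.rpow_one 2]
    rw [← Real.rpow_add two_pos]
    congr 1
    ring
  rw [beta, beta, ← add_div, dup hA, dup hB, dup (add_pos hA hB)]
  field_simp
  rw [hp]

theorem threeF2_K4_value (a : ℝ) (ha0 : 0 < a) (ha1 : a < 1/2) :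
    ∑' n : ℕ,
        poch (1/2) n * poch (1/2 - a) n * poch (a + 1/2) n
          / (poch (1 - a) n * poch (a + 1) n * (Nat.factorial n)) * (-1 : ℝ) ^ n =
      Real.pi^2 * a * (1 / Real.sin (Real.pi * a))
        / (Real.sqrt 2 * Real.Gamma (5/8 - a/2) * Real.Gamma (7/8 - a/2)
            * Real.Gamma (a/2 + 5/8) * Real.Gamma (a/2 + 7/8)) := by
  have h := hasSum_integral_mul_arcsineMean ha0.le ha1
  rw [integral_mul_arcsineMean ha0 ha1,
    beta_half_div_two_mul_beta (by positivity) (by positivity), beta, Real.Gamma_one_half_eq,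
    show 1 / 2 + (a + 1 / 2) = a + 1 by ring,
    show (a + 1 / 4 + (a + 3 / 4) + 1) / 2 = a + 1 by ring,
    show (a + 1 / 4 + 1) / 2 = a / 2 + 5 / 8 by ring,
    show (a + 3 / 4 + 1) / 2 = a / 2 + 7 / 8 by ring] at h
  have g1 := Real.Gamma_pos_of_pos (by linarith : 0 < 1 / 2 - a)
  have g2 := Real.Gamma_pos_of_pos (by linarith : 0 < 1 - a)
  have g3 := Real.Gamma_pos_of_pos (by linarith : 0 < a + 1 / 2)
  have g4 := Real.Gamma_pos_of_pos (by linarith : 0 < a + 1)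
  have g5 := Real.Gamma_pos_of_pos (by linarith : 0 < 5 / 8 - a / 2)
  have g6 := Real.Gamma_pos_of_pos (by linarith : 0 < 7 / 8 - a / 2)
  have g7 := Real.Gamma_pos_of_pos (by linarith : 0 < a / 2 + 5 / 8)
  have g8 := Real.Gamma_pos_of_pos (by linarith : 0 < a / 2 + 7 / 8)
  have hrefl : Real.Gamma (a + 1) * Real.Gamma (1 - a) =
      Real.pi * a * (1 / Real.sin (Real.pi * a)) := by
    rw [Real.Gamma_add_one ha0.ne', mul_assoc, Real.Gamma_mul_Gamma_one_sub]
    ring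
  have hsqrt : (2 : ℝ) ^ (-1 / 2 : ℝ) = 1 / √2 := by
    rw [Real.sqrt_eq_rpow, neg_div, Real.rpow_neg two_pos.le, one_div, one_div]
  have h2 := Real.mul_self_sqrt Real.pi_pos.le
  have hM : Real.Gamma (a + 1 / 2) * Real.Gamma (1 / 2 - a) /
      (Real.Gamma (1 - a) * Real.Gamma (a + 1)) ≠ 0 := by positivity
  rw [← mul_right_inj' hM, ← tsum_mul_left, h.tsum_eq, hsqrt, sq, mul_assoc Real.pi,
    mul_assoc Real.pi, ← hrefl]
  generalize Real.Gamma (1 / 2 - a) = x at g1 ⊢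
  generalize Real.Gamma (5 / 8 - a / 2) = y at g5 ⊢
  generalize Real.Gamma (7 / 8 - a / 2) = z at g6 ⊢
  field_simp
  linear_combination h2
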